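/- Let X and Y be nonempty finite sets, μ: X → ℝ and ν: Y → ℝ strictly positive weight functions, c: X × Y → ℝ a cost, ε > 0, φ₁, φ₂ entropy functions satisfying Assumption A, and X_J ⊆ X a nonempty subset with μ_J := μ restricted to X_J. Define the solve map S_J on nonnegative plans π: X × Y → ℝ≥0 by S_J(π) := the unique minimizer over nonnegative plans on X_J × Y of E_J(·| ν_{-J}(π)), where ν_{-J}(π)(y) := Σ_{x ∉ X_J} π(x,y). Then S_J is continuous as a map from (ℝ≥0)^{X×Y} to (ℝ≥0)^{X_J×Y}. -/

import Mathlib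

open Filter Topology
open scoped Classical

noncomputable section

/-- `φ : ℝ → ℝ ∪ {+∞}` is an entropy function: lower semicontinuous, convex,
`dom(φ) ⊆ [0,∞)`, `dom(φ)\{0} ≠ ∅`, never taking the value `-∞`. -/
def IsEntropyFn (φ : ℝ → EReal) : Prop :=
  LowerSemicontinuous φ ∧
  (∀ x y a b : ℝ, 0 ≤ a → 0 ≤ b → a + b = 1 →
      φ (a * x + b * y) ≤ (a : EReal) * φ x + (b : EReal) * φ y) ∧
  (∀ x : ℝ, φ x ≠ ⊥) ∧
  (∀ x : ℝ, φ x < ⊤ → 0 ≤ x) ∧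
  (∃ x : ℝ, x ≠ 0 ∧ φ x < ⊤)

/-- The recession slope `φ'_∞ = lim_{x→∞} φ(x)/x`. -/
def recessionSlope (φ : ℝ → EReal) : EReal :=
  Filter.limsup (fun x : ℝ => φ x * ((x⁻¹ : ℝ) : EReal)) Filter.atTop

/-- The `φ`-divergence on a finite set `Z`:
`D_φ(ρ|σ) = ∑_{z : σ z > 0} σ z · φ(ρ z / σ z) + φ'_∞ · ∑_{z : σ z = 0} ρ z`. -/
def divergence {Z : Type*} [Fintype Z] (φ : ℝ → EReal) (ρ σ : Z → ℝ) : EReal :=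
  (∑ z, if 0 < σ z then (σ z : EReal) * φ (ρ z / σ z) else 0)
    + recessionSlope φ * ((∑ z, if σ z = 0 then ρ z else 0 : ℝ) : EReal)

/-- The convex conjugate `φ*(z) = sup_{x ∈ ℝ} (z·x − φ(x))`. -/
def conjFn (φ : ℝ → EReal) (z : ℝ) : EReal :=
  ⨆ x : ℝ, (((z * x : ℝ) : EReal) - φ x)

/-- Kullback–Leibler divergence on a finite set, with `0·log 0 = 0`:
`KL(ρ|σ) = ∑ z (ρ z log(ρ z/σ z) − ρ z + σ z)` if `ρ ≪ σ`, else `+∞`. -/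
def KLfin {Z : Type*} [Fintype Z] (ρ σ : Z → ℝ) : EReal :=
  if ∀ z, σ z = 0 → ρ z = 0 then
    ((∑ z, (ρ z * Real.log (ρ z / σ z) - ρ z + σ z) : ℝ) : EReal)
  else ⊤

/-- Assumption A: the entropy function `φ` is nonnegative, finite on `[0,∞)`,
and continuously differentiable on the interior `(0,∞)` of its domain. -/
def AssumptionA (φ : ℝ → EReal) : Prop :=
  IsEntropyFn φ ∧ (∀ x : ℝ, 0 ≤ φ x) ∧ (∀ x : ℝ, 0 ≤ x → φ x ≠ ⊤) ∧
  ContDiffOn ℝ 1 (fun s : ℝ => (φ s).toReal) (Set.Ioi (0 : ℝ))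

/-- Primal objective of the unbalanced (cell) problem with `Y`-submarginal `νm`:
`E_J(π|νm) = ⟨c, π⟩ + ε KL(π | μ⊗ν) + D_{φ₁}(P_X π | μ) + D_{φ₂}(P_Y π + νm | ν)`. -/
def EJfun {W Y : Type*} [Fintype W] [Fintype Y]
    (c : W → Y → ℝ) (ε : ℝ) (φ₁ φ₂ : ℝ → EReal)
    (μ : W → ℝ) (ν : Y → ℝ) (νm : Y → ℝ) (π : W → Y → ℝ) : EReal :=
  ((∑ x, ∑ y, c x y * π x y : ℝ) : EReal)
    + (ε : EReal) * KLfin (fun p : W × Y => π p.1 p.2) (fun p : W × Y => μ p.1 * ν p.2)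
    + divergence φ₁ (fun x => ∑ y, π x y) μ
    + divergence φ₂ (fun y => (∑ x, π x y) + νm y) ν

/-- Dual objective of the unbalanced (cell) problem with `Y`-submarginal `νm`. -/
def DJfun {W Y : Type*} [Fintype W] [Fintype Y]
    (c : W → Y → ℝ) (ε : ℝ) (φ₁ φ₂ : ℝ → EReal)
    (μ : W → ℝ) (ν : Y → ℝ) (νm : Y → ℝ) (α : W → ℝ) (β : Y → ℝ) : EReal :=
  ((ε * ∑ x, ∑ y, (1 - Real.exp ((α x + β y - c x y) / ε)) * (μ x * ν y) : ℝ) : EReal)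
    - (∑ x, (μ x : EReal) * conjFn φ₁ (-(α x)))
    - (∑ y, (ν y : EReal) * conjFn φ₂ (-(β y)))
    - ((∑ y, β y * νm y : ℝ) : EReal)

/-- The `Y`-submarginal `ν_{-J}` of the plan `π` outside the cell `J`:
`ν_{-J}(y) = ∑_{x ∉ J} π(x,y)`. -/
def outMarg {X Y : Type*} [Fintype X] (J : Set X) (π : X → Y → ℝ) : Y → ℝ :=
  fun y => ∑ x, (Jᶜ).indicator (fun x' => π x' y) x

/-- The global unbalanced objective
`E(π) = ⟨c, π⟩ + ε KL(π|μ⊗ν) + D_{φ₁}(P_X π|μ) + D_{φ₂}(P_Y π|ν)`. -/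
def Eglobal {X Y : Type*} [Fintype X] [Fintype Y]
    (c : X → Y → ℝ) (ε : ℝ) (φ₁ φ₂ : ℝ → EReal)
    (μ : X → ℝ) (ν : Y → ℝ) (π : X → Y → ℝ) : EReal :=
  EJfun c ε φ₁ φ₂ μ ν (fun _ => 0) π

/-! The Kullback–Leibler term is itself a `φ`-divergence, for the strictly convex integrand
`InformationTheory.klFun`. Hence, on nonnegative plans, the cell objective is a real-valued sum of
finite divergences which is jointly continuous in the submarginal and the plan, and strictly convex
in the plan. Minimizers of such functions are continuous: if the minimizer left a compact
neighbourhood `K` of its limit, a connected sublevel set would have to cross the frontier of `K`,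
where the objective is, by compactness, uniformly above the level. -/

section Minimizers

variable {N E β : Type*} [TopologicalSpace N] [TopologicalSpace E]

theorem continuousWithinAt_of_isMinOn_of_isPreconnected_sublevel [LocallyCompactSpace E] [T2Space E]
    [LinearOrder β] [TopologicalSpace β] [OrderClosedTopology β]
    {G : N → E → β} {A : Set N} {C : Set E} {s : N → E} {n₀ : N}
    (hG : ContinuousOn (fun q : N × E => G q.1 q.2) (A ×ˢ C)) (hC : IsClosed C)
    (hsub : ∀ n ∈ A, ∀ r, IsPreconnected {x ∈ C | G n x ≤ r})
    (hsC : ∀ n ∈ A, s n ∈ C) (hmin : ∀ n ∈ A, IsMinOn (G n) C (s n)) (hn₀ : n₀ ∈ A)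
    (huniq : ∀ x ∈ C, IsMinOn (G n₀) C x → x = s n₀) :
    ContinuousWithinAt s A n₀ := by
  refine (compact_basis_nhds (s n₀)).tendsto_right_iff.2 fun K ⟨hK, hKc⟩ => ?_
  have s_mem_interior : s n₀ ∈ interior K := mem_interior_iff_mem_nhds.2 hK
  have frontier_compact : IsCompact (frontier K ∩ C) :=
    (hKc.of_isClosed_subset isClosed_frontier hKc.isClosed.frontier_subset).inter_right hC
  have lt_on_frontier : ∀ x ∈ frontier K ∩ C, G n₀ (s n₀) < G n₀ x := by
    rintro x ⟨hxK, hxC⟩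
    by_contra! hle
    have hx : x = s n₀ := huniq x hxC fun y hy => hle.trans (hmin n₀ hn₀ hy)
    exact hxK.2 (hx ▸ s_mem_interior)
  have frontier_above : ∀ᶠ n in 𝓝 n₀, ∀ x ∈ frontier K ∩ C,
      (n, x) ∈ A ×ˢ C → G n (s n₀) < G n x := by
    refine frontier_compact.eventually_forall_of_forall_eventually fun x hx => ?_
    have hlt : ∀ᶠ q : N × E in 𝓝[A ×ˢ C] (n₀, x), G q.1 (s n₀) < G q.1 q.2 := by
      have hbase : ContinuousOn (fun q : N × E => G q.1 (s n₀)) (A ×ˢ C) :=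
        hG.comp (f := fun q : N × E => (q.1, s n₀)) (by fun_prop)
          fun q hq => ⟨hq.1, hsC n₀ hn₀⟩
      exact (hbase (n₀, x) ⟨hn₀, hx.2⟩).eventually_lt (hG (n₀, x) ⟨hn₀, hx.2⟩) (lt_on_frontier x hx)
    exact eventually_nhdsWithin_iff.1 hlt
  filter_upwards [mem_nhdsWithin_of_mem_nhds frontier_above, self_mem_nhdsWithin] with n hn hnA
  refine interior_subset <| (hsub n hnA (G n (s n₀))).subset_of_closure_inter_subset isOpen_interior
    ⟨s n₀, ⟨hsC n₀ hn₀, le_rfl⟩, s_mem_interior⟩ ?_ ⟨hsC n hnA, hmin n hnA (hsC n₀ hn₀)⟩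
  rintro x ⟨hxK, hxC, hle⟩
  by_contra hx
  have hxf : x ∈ frontier K := ⟨closure_mono interior_subset hxK, hx⟩
  exact (hn x ⟨hxf, hxC⟩ ⟨hnA, hxC⟩).not_ge hle

theorem continuousOn_of_isMinOn_of_strictConvexOn [AddCommGroup E] [Module ℝ E]
    [IsTopologicalAddGroup E] [ContinuousSMul ℝ E] [LocallyCompactSpace E] [T2Space E]
    {G : N → E → ℝ} {A : Set N} {C : Set E} {s : N → E}
    (hG : ContinuousOn (fun q : N × E => G q.1 q.2) (A ×ˢ C)) (hC : IsClosed C)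
    (hconv : ∀ n ∈ A, StrictConvexOn ℝ C (G n))
    (hsC : ∀ n ∈ A, s n ∈ C) (hmin : ∀ n ∈ A, IsMinOn (G n) C (s n)) :
    ContinuousOn s A := fun n₀ hn₀ =>
  continuousWithinAt_of_isMinOn_of_isPreconnected_sublevel hG hC
    (fun n hn r => ((hconv n hn).convexOn.convex_le r).isPreconnected) hsC hmin hn₀
    fun _ hx hxmin => (hconv n₀ hn₀).eq_of_isMinOn hxmin (hmin n₀ hn₀) hx (hsC n₀ hn₀)

end Minimizers

section Convexity

theorem continuousOn_Ici_of_convexOn_of_lowerSemicontinuousWithinAt {f : ℝ → ℝ} {a : ℝ}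
    (hf : ConvexOn ℝ (Set.Ici a) f) (hlsc : LowerSemicontinuousWithinAt f (Set.Ici a) a) :
    ContinuousOn f (Set.Ici a) := by
  intro x hx
  rcases eq_or_lt_of_le (Set.mem_Ici.1 hx) with rfl | hax
  · refine continuousWithinAt_iff_lower_upperSemicontinuousWithinAt.2 ⟨hlsc, fun r hr => ?_⟩
    have chord_tendsto : Tendsto (fun t => (1 - (t - a)) * f a + (t - a) * f (a + 1))
        (𝓝[Set.Ici a] a) (𝓝 (f a)) := by
      refine tendsto_nhdsWithin_of_tendsto_nhds (Continuous.tendsto' (by fun_prop) _ _ (by simp))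
    filter_upwards [chord_tendsto.eventually_lt_const hr, self_mem_nhdsWithin,
      mem_nhdsWithin_of_mem_nhds (Iio_mem_nhds (lt_add_one a))] with t ht hat hta
    have le_chord := hf.2 (Set.mem_Ici.2 le_rfl) (Set.mem_Ici.2 (lt_add_one a).le)
      (show 0 ≤ 1 - (t - a) by linarith [Set.mem_Iio.1 hta])
      (sub_nonneg.2 (Set.mem_Ici.1 hat)) (by ring)
    have ht_eq : (1 - (t - a)) • a + (t - a) • (a + 1) = t := by simp only [smul_eq_mul]; ring
    exact (ht_eq ▸ le_chord).trans_lt ht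
  · refine (hf.continuousOn_interior.continuousAt ?_).continuousWithinAt
    rw [interior_Ici]
    exact Ioi_mem_nhds hax

theorem strictConvexOn_comp_linearMap_of_injective {E F : Type*} [AddCommGroup E] [Module ℝ E]
    [AddCommGroup F] [Module ℝ F] {s : Set F} {f : F → ℝ} (hf : StrictConvexOn ℝ s f)
    (g : E →ₗ[ℝ] F) (hg : Function.Injective g) : StrictConvexOn ℝ (g ⁻¹' s) (f ∘ g) :=
  ⟨hf.1.linear_preimage g, fun x hx y hy hxy a b ha hb hab => by
    simpa only [Function.comp_apply, map_add, map_smul] using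
      hf.2 hx hy (hg.ne hxy) ha hb hab⟩

theorem strictConvexOn_const_mul {E : Type*} [AddCommGroup E] [Module ℝ E] {s : Set E} {f : E → ℝ}
    (hf : StrictConvexOn ℝ s f) {k : ℝ} (hk : 0 < k) : StrictConvexOn ℝ s (fun x => k * f x) :=
  ⟨hf.1, fun x hx y hy hxy a b ha hb hab => by
    simpa only [mul_smul_comm, mul_add] using mul_lt_mul_of_pos_left (hf.2 hx hy hxy ha hb hab) hk⟩

variable {ι : Type*} [Fintype ι] {E : ι → Type*} [∀ i, AddCommGroup (E i)] [∀ i, Module ℝ (E i)]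
  {s : ∀ i, Set (E i)} {g : ∀ i, E i → ℝ}

theorem convexOn_pi_sum (hg : ∀ i, ConvexOn ℝ (s i) (g i)) :
    ConvexOn ℝ (Set.univ.pi s) (fun x => ∑ i, g i (x i)) := by
  refine ⟨convex_pi fun i _ => (hg i).1, fun x hx y hy a b ha hb hab => ?_⟩
  simp only [Finset.smul_sum, ← Finset.sum_add_distrib]
  exact Finset.sum_le_sum fun i _ => (hg i).2 (hx i trivial) (hy i trivial) ha hb hab

theorem strictConvexOn_pi_sum (hg : ∀ i, StrictConvexOn ℝ (s i) (g i)) :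
    StrictConvexOn ℝ (Set.univ.pi s) (fun x => ∑ i, g i (x i)) := by
  refine ⟨convex_pi fun i _ => (hg i).1, fun x hx y hy hxy a b ha hb hab => ?_⟩
  obtain ⟨i, hi⟩ := Function.ne_iff.1 hxy
  simp only [Finset.smul_sum, ← Finset.sum_add_distrib]
  exact Finset.sum_lt_sum
    (fun j _ => (hg j).convexOn.2 (hx j trivial) (hy j trivial) ha.le hb.le hab)
    ⟨i, Finset.mem_univ i, (hg i).2 (hx i trivial) (hy i trivial) hi ha hb hab⟩

end Convexity

section FiniteDivergence

variable {Z : Type*} [Fintype Z] {f : ℝ → ℝ} {σ : Z → ℝ}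

/-- The divergence `∑ z, σ z * f (ρ z / σ z)` of a real-valued integrand `f`. It represents
`divergence φ ρ σ` and `KLfin ρ σ` as real numbers when `σ` is positive; there is no recession term,
so points with `σ z = 0` contribute nothing. -/
def finDivergence (f : ℝ → ℝ) (ρ σ : Z → ℝ) : ℝ :=
  ∑ z, σ z * f (ρ z / σ z)

theorem convexOn_finDivergence (hf : ConvexOn ℝ (Set.Ici 0) f) (hσ : ∀ z, 0 ≤ σ z) :
    ConvexOn ℝ (Set.Ici 0) (fun ρ => finDivergence f ρ σ) := by
  have hterm : ∀ z, ConvexOn ℝ (Set.Ici 0) (fun r => σ z * f (r / σ z)) := fun z =>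
    ((hf.comp_linearMap (LinearMap.mulRight ℝ (σ z)⁻¹)).smul (hσ z)).subset
      (fun r hr => mul_nonneg hr (inv_nonneg.2 (hσ z))) (convex_Ici 0)
  simpa only [Set.pi_univ_Ici] using! convexOn_pi_sum hterm

theorem strictConvexOn_finDivergence (hf : StrictConvexOn ℝ (Set.Ici 0) f) (hσ : ∀ z, 0 < σ z) :
    StrictConvexOn ℝ (Set.Ici 0) (fun ρ => finDivergence f ρ σ) := by
  have hterm : ∀ z, StrictConvexOn ℝ (Set.Ici 0) (fun r => σ z * f (r / σ z)) := fun z =>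
    (strictConvexOn_const_mul (strictConvexOn_comp_linearMap_of_injective hf
      (LinearMap.mulRight ℝ (σ z)⁻¹) (mul_left_injective₀ (inv_ne_zero (hσ z).ne'))) (hσ z)).subset
      (fun r hr => mul_nonneg hr (inv_nonneg.2 (hσ z).le)) (convex_Ici 0)
  simpa only [Set.pi_univ_Ici] using! strictConvexOn_pi_sum hterm

theorem continuousOn_finDivergence (hf : ContinuousOn f (Set.Ici 0)) (hσ : ∀ z, 0 ≤ σ z) :
    ContinuousOn (fun ρ => finDivergence f ρ σ) (Set.Ici 0) :=
  continuousOn_finsetSum _ fun z _ => continuousOn_const.mul <|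
    hf.comp (f := fun ρ : Z → ℝ => ρ z / σ z) (by fun_prop) fun _ hρ => div_nonneg (hρ z) (hσ z)

theorem KLfin_eq_coe_finDivergence {ρ : Z → ℝ} (hσ : ∀ z, σ z ≠ 0) :
    KLfin ρ σ = (finDivergence InformationTheory.klFun ρ σ : EReal) := by
  rw [KLfin, if_pos fun z hz => absurd hz (hσ z), finDivergence]
  congr 1
  refine Finset.sum_congr rfl fun z _ => ?_
  have := hσ z
  rw [InformationTheory.klFun_apply]
  field_simp
  ring

end FiniteDivergence

theorem coe_finsetSum_ereal {ι : Type*} (s : Finset ι) (f : ι → ℝ) :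
    ((∑ i ∈ s, f i : ℝ) : EReal) = ∑ i ∈ s, (f i : EReal) :=
  map_sum (⟨⟨Real.toEReal, EReal.coe_zero⟩, EReal.coe_add⟩ : ℝ →+ EReal) f s

namespace IsEntropyFn

variable {φ : ℝ → EReal}

theorem coe_toReal (hφ : IsEntropyFn φ) (hfin : ∀ x, 0 ≤ x → φ x ≠ ⊤) {x : ℝ} (hx : 0 ≤ x) :
    ((φ x).toReal : EReal) = φ x :=
  EReal.coe_toReal (hfin x hx) (hφ.2.2.1 x)

theorem convexOn_toReal (hφ : IsEntropyFn φ) (hfin : ∀ x, 0 ≤ x → φ x ≠ ⊤) :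
    ConvexOn ℝ (Set.Ici 0) (fun x => (φ x).toReal) := by
  refine ⟨convex_Ici 0, fun x hx y hy a b ha hb hab => ?_⟩
  have hle := hφ.2.1 x y a b ha hb hab
  rw [← smul_eq_mul, ← smul_eq_mul, ← hφ.coe_toReal hfin hx, ← hφ.coe_toReal hfin hy,
    ← hφ.coe_toReal hfin (convex_Ici (0 : ℝ) hx hy ha hb hab)] at hle
  exact_mod_cast hle

theorem continuousOn_toReal (hφ : IsEntropyFn φ) (hfin : ∀ x, 0 ≤ x → φ x ≠ ⊤) :
    ContinuousOn (fun x => (φ x).toReal) (Set.Ici 0) := by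
  refine continuousOn_Ici_of_convexOn_of_lowerSemicontinuousWithinAt (hφ.convexOn_toReal hfin)
    fun r hr => ?_
  have hr' : (r : EReal) < φ 0 := by
    rw [← hφ.coe_toReal hfin le_rfl]
    exact_mod_cast hr
  filter_upwards [mem_nhdsWithin_of_mem_nhds (hφ.1 0 r hr'), self_mem_nhdsWithin] with x hrx hx
  rw [← hφ.coe_toReal hfin hx] at hrx
  exact_mod_cast hrx

theorem divergence_eq_coe_finDivergence (hφ : IsEntropyFn φ) (hfin : ∀ x, 0 ≤ x → φ x ≠ ⊤)
    {Z : Type*} [Fintype Z] {ρ σ : Z → ℝ} (hρ : ∀ z, 0 ≤ ρ z) (hσ : ∀ z, 0 < σ z) :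
    divergence φ ρ σ = (finDivergence (fun x => (φ x).toReal) ρ σ : EReal) := by
  have no_singular_part : (∑ z, if σ z = 0 then ρ z else 0) = 0 :=
    Finset.sum_eq_zero fun z _ => if_neg (hσ z).ne'
  rw [divergence, no_singular_part, EReal.coe_zero, mul_zero, add_zero, finDivergence]
  refine (Finset.sum_congr rfl fun z _ => ?_).trans (coe_finsetSum_ereal _ _).symm
  rw [if_pos (hσ z), EReal.coe_mul, hφ.coe_toReal hfin (div_nonneg (hρ z) (hσ z).le)]

end IsEntropyFn

section CellObjective

variable {W Y : Type*}

/-- The cost term `⟨c, π⟩` as a linear functional of the plan. -/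
def transportCost [Fintype W] [Fintype Y] (c : W → Y → ℝ) : (W → Y → ℝ) →ₗ[ℝ] ℝ where
  toFun π := ∑ x, ∑ y, c x y * π x y
  map_add' _ _ := by simp only [Pi.add_apply, mul_add, Finset.sum_add_distrib]
  map_smul' _ _ := by
    simp only [Pi.smul_apply, smul_eq_mul, mul_left_comm (c _ _), ← Finset.mul_sum,
      RingHom.id_apply]

/-- The first marginal `P_X` as a linear map of plans. -/
def marginalFst [Fintype Y] : (W → Y → ℝ) →ₗ[ℝ] W → ℝ where
  toFun π x := ∑ y, π x y
  map_add' _ _ := funext fun _ => Finset.sum_add_distrib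
  map_smul' _ _ := funext fun _ => (Finset.mul_sum _ _ _).symm

/-- The second marginal `P_Y` as a linear map of plans. -/
def marginalSnd [Fintype W] : (W → Y → ℝ) →ₗ[ℝ] Y → ℝ where
  toFun π y := ∑ x, π x y
  map_add' _ _ := funext fun _ => Finset.sum_add_distrib
  map_smul' _ _ := funext fun _ => (Finset.mul_sum _ _ _).symm

theorem marginalFst_nonneg [Fintype Y] {π : W → Y → ℝ} (hπ : 0 ≤ π) : 0 ≤ marginalFst π :=
  fun x => Finset.sum_nonneg fun y _ => hπ x y

theorem marginalSnd_nonneg [Fintype W] {π : W → Y → ℝ} (hπ : 0 ≤ π) : 0 ≤ marginalSnd π :=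
  fun y => Finset.sum_nonneg fun x _ => hπ x y

variable [Fintype W] [Fintype Y]

/-- The cell objective `E_J(π|νm)` for real-valued integrands `f₁`, `f₂`, with the
Kullback–Leibler term written as the finite divergence of `klFun`. -/
def cellObjective (c : W → Y → ℝ) (ε : ℝ) (f₁ f₂ : ℝ → ℝ) (μ : W → ℝ) (ν : Y → ℝ)
    (νm : Y → ℝ) (π : W → Y → ℝ) : ℝ :=
  transportCost c π
    + ε * finDivergence InformationTheory.klFun (Function.uncurry π) (fun p => μ p.1 * ν p.2)
    + finDivergence f₁ (marginalFst π) μ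
    + finDivergence f₂ (marginalSnd π + νm) ν

variable {c : W → Y → ℝ} {ε : ℝ} {μ : W → ℝ} {ν : Y → ℝ}

theorem EJfun_eq_coe_cellObjective {φ₁ φ₂ : ℝ → EReal}
    (h₁ : IsEntropyFn φ₁) (hfin₁ : ∀ x, 0 ≤ x → φ₁ x ≠ ⊤)
    (h₂ : IsEntropyFn φ₂) (hfin₂ : ∀ x, 0 ≤ x → φ₂ x ≠ ⊤)
    (hμ : ∀ x, 0 < μ x) (hν : ∀ y, 0 < ν y)
    {νm : Y → ℝ} (hνm : 0 ≤ νm) {π : W → Y → ℝ} (hπ : 0 ≤ π) :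
    EJfun c ε φ₁ φ₂ μ ν νm π =
      (cellObjective c ε (fun x => (φ₁ x).toReal) (fun x => (φ₂ x).toReal) μ ν νm π : EReal) := by
  have hfst : divergence φ₁ (fun x => ∑ y, π x y) μ =
      (finDivergence (fun x => (φ₁ x).toReal) (marginalFst π) μ : EReal) :=
    h₁.divergence_eq_coe_finDivergence hfin₁ (marginalFst_nonneg hπ) hμ
  have hsnd : divergence φ₂ (fun y => (∑ x, π x y) + νm y) ν =
      (finDivergence (fun x => (φ₂ x).toReal) (marginalSnd π + νm) ν : EReal) :=
    h₂.divergence_eq_coe_finDivergence hfin₂ (add_nonneg (marginalSnd_nonneg hπ) hνm) hν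
  rw [EJfun, KLfin_eq_coe_finDivergence fun p : W × Y => (mul_pos (hμ p.1) (hν p.2)).ne', hfst,
    hsnd]
  rfl

variable {f₁ f₂ : ℝ → ℝ}

theorem strictConvexOn_cellObjective (hε : 0 < ε) (hf₁ : ConvexOn ℝ (Set.Ici 0) f₁)
    (hf₂ : ConvexOn ℝ (Set.Ici 0) f₂) (hμ : ∀ x, 0 < μ x) (hν : ∀ y, 0 < ν y)
    {νm : Y → ℝ} (hνm : 0 ≤ νm) :
    StrictConvexOn ℝ (Set.Ici 0) (cellObjective c ε f₁ f₂ μ ν νm) := by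
  have convex_plans : Convex ℝ (Set.Ici (0 : W → Y → ℝ)) := convex_Ici 0
  have cost_convex : ConvexOn ℝ (Set.Ici 0) (transportCost c) :=
    (transportCost c).convexOn convex_plans
  have entropy_strict : StrictConvexOn ℝ (Set.Ici (0 : W → Y → ℝ)) fun π =>
      ε * finDivergence InformationTheory.klFun (Function.uncurry π) (fun p => μ p.1 * ν p.2) :=
    (strictConvexOn_const_mul (strictConvexOn_comp_linearMap_of_injective
      (strictConvexOn_finDivergence InformationTheory.strictConvexOn_klFun
        fun p : W × Y => mul_pos (hμ p.1) (hν p.2))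
      (LinearEquiv.curry ℝ ℝ W Y).symm.toLinearMap
      (LinearEquiv.curry ℝ ℝ W Y).symm.injective) hε).subset
      (fun _ hπ p => hπ p.1 p.2) convex_plans
  have fst_convex : ConvexOn ℝ (Set.Ici (0 : W → Y → ℝ)) fun π =>
      finDivergence f₁ (marginalFst π) μ :=
    ((convexOn_finDivergence hf₁ fun x => (hμ x).le).comp_linearMap marginalFst).subset
      (fun _ => marginalFst_nonneg) convex_plans
  have snd_convex : ConvexOn ℝ (Set.Ici (0 : W → Y → ℝ)) fun π =>
      finDivergence f₂ (marginalSnd π + νm) ν :=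
    (((convexOn_finDivergence hf₂ fun y => (hν y).le).translate_left νm).comp_linearMap
      marginalSnd).subset (fun _ hπ => add_nonneg hνm (marginalSnd_nonneg hπ)) convex_plans
  exact ((cost_convex.add_strictConvexOn entropy_strict).add_convexOn fst_convex).add_convexOn
    snd_convex

theorem continuousOn_cellObjective (hf₁ : ContinuousOn f₁ (Set.Ici 0))
    (hf₂ : ContinuousOn f₂ (Set.Ici 0)) (hμ : ∀ x, 0 ≤ μ x) (hν : ∀ y, 0 ≤ ν y) :
    ContinuousOn (fun q : (Y → ℝ) × (W → Y → ℝ) => cellObjective c ε f₁ f₂ μ ν q.1 q.2)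
      (Set.Ici 0 ×ˢ Set.Ici 0) := by
  have cost_cont : Continuous (transportCost c) := LinearMap.continuous_of_finiteDimensional _
  have fst_cont : Continuous (marginalFst : (W → Y → ℝ) →ₗ[ℝ] W → ℝ) :=
    LinearMap.continuous_of_finiteDimensional _
  have snd_cont : Continuous (marginalSnd : (W → Y → ℝ) →ₗ[ℝ] Y → ℝ) :=
    LinearMap.continuous_of_finiteDimensional _
  refine (((cost_cont.comp continuous_snd).continuousOn.add (continuousOn_const.mul ?_)).add
    ?_).add ?_
  · refine (continuousOn_finDivergence InformationTheory.continuous_klFun.continuousOn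
      fun p : W × Y => mul_nonneg (hμ p.1) (hν p.2)).comp ?_ fun _ hq p => hq.2 p.1 p.2
    unfold Function.uncurry
    fun_prop
  · exact (continuousOn_finDivergence hf₁ hμ).comp (fst_cont.comp continuous_snd).continuousOn
      fun _ hq => marginalFst_nonneg hq.2
  · exact (continuousOn_finDivergence hf₂ hν).comp
      ((snd_cont.comp continuous_snd).add continuous_fst).continuousOn
      fun _ hq => add_nonneg (marginalSnd_nonneg hq.2) hq.1

end CellObjective

section OuterSubmarginal

variable {X Y : Type*} [Fintype X] (J : Set X)

theorem outMarg_nonneg {π : X → Y → ℝ} (hπ : ∀ x y, 0 ≤ π x y) (y : Y) : 0 ≤ outMarg J π y :=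
  Finset.sum_nonneg fun x _ => Set.indicator_nonneg (fun x' _ => hπ x' y) x

theorem continuous_outMarg : Continuous (outMarg J : (X → Y → ℝ) → Y → ℝ) := by
  refine continuous_pi fun y => continuous_finsetSum _ fun x _ => ?_
  by_cases hx : x ∈ Jᶜ
  · simp only [Set.indicator_of_mem hx]
    fun_prop
  · simp only [Set.indicator_of_notMem hx]
    fun_prop

end OuterSubmarginal

theorem solve_map_continuous_general
    {N W Y : Type*} [TopologicalSpace N] [Fintype W] [Fintype Y]
    (μ : W → ℝ) (ν : Y → ℝ) (hμ : ∀ x, 0 < μ x) (hν : ∀ y, 0 < ν y)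
    (c : W → Y → ℝ) (ε : ℝ) (hε : 0 < ε) (φ₁ φ₂ : ℝ → EReal)
    (h₁ : IsEntropyFn φ₁) (hfin₁ : ∀ x, 0 ≤ x → φ₁ x ≠ ⊤)
    (h₂ : IsEntropyFn φ₂) (hfin₂ : ∀ x, 0 ≤ x → φ₂ x ≠ ⊤)
    (A : Set N) (νm : N → Y → ℝ) (hνm : ContinuousOn νm A) (hνm₀ : ∀ n ∈ A, ∀ y, 0 ≤ νm n y)
    (S : N → W → Y → ℝ)
    (hS : ∀ n ∈ A, (∀ x y, 0 ≤ S n x y) ∧ ∀ π : W → Y → ℝ, (∀ x y, 0 ≤ π x y) →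
      EJfun c ε φ₁ φ₂ μ ν (νm n) (S n) ≤ EJfun c ε φ₁ φ₂ μ ν (νm n) π) :
    ContinuousOn S A := by
  refine continuousOn_of_isMinOn_of_strictConvexOn (C := Set.Ici 0)
    (G := fun n => cellObjective c ε (fun x => (φ₁ x).toReal) (fun x => (φ₂ x).toReal) μ ν (νm n))
    ?_ isClosed_Ici (fun n hn => ?_) (fun n hn => (hS n hn).1) (fun n hn π hπ => ?_)
  · exact (continuousOn_cellObjective (h₁.continuousOn_toReal hfin₁) (h₂.continuousOn_toReal hfin₂)
      (fun x => (hμ x).le) (fun y => (hν y).le)).comp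
      (f := fun q : N × (W → Y → ℝ) => (νm q.1, q.2))
      ((hνm.comp continuousOn_fst fun _ hq => hq.1).prodMk continuousOn_snd)
      fun q hq => ⟨hνm₀ q.1 hq.1, hq.2⟩
  · exact strictConvexOn_cellObjective hε (h₁.convexOn_toReal hfin₁) (h₂.convexOn_toReal hfin₂)
      hμ hν (hνm₀ n hn)
  · have hle := (hS n hn).2 π hπ
    rw [EJfun_eq_coe_cellObjective h₁ hfin₁ h₂ hfin₂ hμ hν (hνm₀ n hn) (hS n hn).1,
      EJfun_eq_coe_cellObjective h₁ hfin₁ h₂ hfin₂ hμ hν (hνm₀ n hn) hπ] at hle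
    exact EReal.coe_le_coe_iff.1 hle

/-- continuity of the solve map `S_J` sending a nonnegative plan
`π` on `X × Y` to the unique minimizer of the cell subproblem
`E_J(·|ν_{-J}(π))` on `X_J × Y`. -/
theorem solve_map_continuous
    {X Y : Type*} [Fintype X] [Fintype Y] [Nonempty X] [Nonempty Y]
    (μ : X → ℝ) (ν : Y → ℝ) (hμ : ∀ x, 0 < μ x) (hν : ∀ y, 0 < ν y)
    (c : X → Y → ℝ) (ε : ℝ) (hε : 0 < ε)
    (φ₁ φ₂ : ℝ → EReal) (h₁ : AssumptionA φ₁) (h₂ : AssumptionA φ₂)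
    (J : Set X) (hJ : J.Nonempty)
    (S : (X → Y → ℝ) → (↥J → Y → ℝ))
    (hS : ∀ π : X → Y → ℝ, (∀ x y, 0 ≤ π x y) →
      (∀ (j : J) (y : Y), 0 ≤ S π j y) ∧
      ∀ π' : ↥J → Y → ℝ, (∀ (j : J) (y : Y), 0 ≤ π' j y) →
        EJfun (fun (j : J) y => c j y) ε φ₁ φ₂ (fun (j : J) => μ j) ν
            (outMarg J π) (S π)
          ≤ EJfun (fun (j : J) y => c j y) ε φ₁ φ₂ (fun (j : J) => μ j) ν
            (outMarg J π) π') :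
    ContinuousOn S {π : X → Y → ℝ | ∀ x y, 0 ≤ π x y} :=
  solve_map_continuous_general _ ν (fun j : J => hμ j) hν _ ε hε φ₁ φ₂ h₁.1 h₁.2.2.1 h₂.1 h₂.2.2.1
    _ (outMarg J) (continuous_outMarg J).continuousOn (fun _ => outMarg_nonneg J) S hS

end
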